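/- Let b₀ > 0 and let b, ℓ, č, σ_ζ, σ_μ, Δ, φ₁, φ₂, φ₃, γ_ζ, γ_μ, ρ, Θ, k, z, ζ, μ, g be real numbers satisfying: b ≥ b₀, ℓ ≥ č ≥ 1, σ_ζ ≥ 1, σ_μ ≥ 1, φ₁, φ₂, φ₃, γ_ζ, γ_μ ≥ 1, Δ ≥ φ₂ + 1, ρ ≥ γ_ζ + φ₁ + φ₃ + 2, Θ ≥ max{ℓσ_ζ, č}/(2b₀), and g² ≤ č·φ₁·(φ₂·z² + φ₃·ζ²). Then: −ℓ·(Δ·z² − σ_ζ·γ_ζ·ζ² − σ_μ·γ_μ·μ²) + 2ζ·(g − Θ·b·ρ·ζ − k·μ) ≤ −z² − ζ² + (ℓ·σ_μ·γ_μ + k²)·μ². -/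

import Mathlib

/-- the algebraic estimate underlying Step 1 of the proof of
Theorem 1 (adaptive high-gain design). -/
theorem stmt9 (b₀ b ℓ c σζ σμ Δ φ₁ φ₂ φ₃ γζ γμ ρ Θ k z ζ μ g : ℝ)
    (hb₀ : 0 < b₀) (hb : b₀ ≤ b)
    (hℓc : c ≤ ℓ) (hc : 1 ≤ c)
    (hσζ : 1 ≤ σζ) (hσμ : 1 ≤ σμ)
    (hφ₁ : 1 ≤ φ₁) (hφ₂ : 1 ≤ φ₂) (hφ₃ : 1 ≤ φ₃)
    (hγζ : 1 ≤ γζ) (hγμ : 1 ≤ γμ)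
    (hΔ : φ₂ + 1 ≤ Δ)
    (hρ : γζ + φ₁ + φ₃ + 2 ≤ ρ)
    (hΘ : max (ℓ * σζ) c / (2 * b₀) ≤ Θ)
    (hg : g ^ 2 ≤ c * φ₁ * (φ₂ * z ^ 2 + φ₃ * ζ ^ 2)) :
    -ℓ * (Δ * z ^ 2 - σζ * γζ * ζ ^ 2 - σμ * γμ * μ ^ 2)
        + 2 * ζ * (g - Θ * b * ρ * ζ - k * μ)
      ≤ -z ^ 2 - ζ ^ 2 + (ℓ * σμ * γμ + k ^ 2) * μ ^ 2 := by
  have hℓ : 1 ≤ ℓ := hc.trans hℓc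
  have hΘ1 : max (ℓ * σζ) c ≤ Θ * (2 * b₀) := (div_le_iff₀ (by positivity)).1 hΘ
  have hL1 : ℓ * σζ ≤ Θ * (2 * b₀) := (le_max_left _ _).trans hΘ1
  have hcL : c ≤ ℓ * σζ := by nlinarith
  have hΘ0 : 0 < Θ := by
    by_contra h
    nlinarith
  have hL2 : ℓ * σζ ≤ 2 * (Θ * b) := by nlinarith
  have hρ0 : 0 ≤ ρ := by linarith
  have hcp : 0 < c * φ₁ := by positivity
  have hY : 2 * ζ * g ≤ c * φ₁ * ζ ^ 2 + (φ₂ * z ^ 2 + φ₃ * ζ ^ 2) := by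
    have h1 : 0 ≤ (c * φ₁ * ζ - g) ^ 2 := sq_nonneg _
    have h2 : c * φ₁ * (2 * ζ * g) ≤
        c * φ₁ * (c * φ₁ * ζ ^ 2 + (φ₂ * z ^ 2 + φ₃ * ζ ^ 2)) := by
      nlinarith
    exact le_of_mul_le_mul_left h2 hcp
  have hK : -(2 * ζ * (k * μ)) ≤ ζ ^ 2 + k ^ 2 * μ ^ 2 := by
    nlinarith [sq_nonneg (ζ + k * μ)]
  have hz : φ₂ + 1 ≤ ℓ * Δ := by nlinarith
  have hz2 := mul_le_mul_of_nonneg_right hz (sq_nonneg z)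
  have hA : ℓ * σζ * ρ ≤ 2 * (Θ * b) * ρ := mul_le_mul_of_nonneg_right hL2 hρ0
  have hL0 : 1 ≤ ℓ * σζ := hc.trans hcL
  have hB : ℓ * σζ * (γζ + φ₁ + φ₃ + 2) ≤ ℓ * σζ * ρ :=
    mul_le_mul_of_nonneg_left hρ (by linarith)
  have hC : c * φ₁ ≤ ℓ * σζ * φ₁ := mul_le_mul_of_nonneg_right hcL (by linarith)
  have hD : 1 * φ₃ ≤ ℓ * σζ * φ₃ := mul_le_mul_of_nonneg_right hL0 (by linarith)
  have hE : ℓ * σζ * γζ + c * φ₁ + φ₃ + 2 ≤ 2 * (Θ * b) * ρ := by linarith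
  have hE2 := mul_le_mul_of_nonneg_right hE (sq_nonneg ζ)
  linarith
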